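/- Let n ≥ 3, let 0 < φ ≤ π/2 and 2φ ≥ θ > φ. Then A(n,θ,φ) = A(n−1, ω(θ,φ)), where A(n−1,·) refers to codes on the unit sphere S^{n−2} ⊂ ℝ^{n−1}. -/

import Mathlib

noncomputable section

/-- The "North pole" `(0, …, 0, 1)` of the unit sphere in `ℝ^n`. -/
def north (n : ℕ) : EuclideanSpace ℝ (Fin n) :=
  if h : 0 < n then EuclideanSpace.single ⟨n - 1, Nat.sub_lt h Nat.one_pos⟩ 1 else 0

/-- Angular distance between two points: `arccos ⟨x, y⟩`. -/
def aDist {n : ℕ} (x y : EuclideanSpace ℝ (Fin n)) : ℝ := Real.arccos (inner ℝ x y : ℝ)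

/-- A finite set of unit vectors with pairwise angular distance at least `θ`. -/
def IsCode {n : ℕ} (θ : ℝ) (C : Finset (EuclideanSpace ℝ (Fin n))) : Prop :=
  (∀ x ∈ C, ‖x‖ = 1) ∧ ∀ x ∈ C, ∀ y ∈ C, x ≠ y → θ ≤ aDist x y

/-- `A(n, θ)`: maximal size of a `θ`-code on the unit sphere `S^{n-1} ⊂ ℝ^n`. -/
def sphereMax (n : ℕ) (θ : ℝ) : ℕ :=
  sSup {M | ∃ C : Finset (EuclideanSpace ℝ (Fin n)), IsCode θ C ∧ C.card = M}

/-- `A(n, θ, φ)`: maximal size of a `θ`-code in the cap of angular radius `φ` about the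
North pole. -/
def capMax (n : ℕ) (θ φ : ℝ) : ℕ :=
  sSup {M | ∃ C : Finset (EuclideanSpace ℝ (Fin n)), IsCode θ C ∧
    (∀ x ∈ C, aDist x (north n) ≤ φ) ∧ C.card = M}

/-- `A(n, θ, [ψ, φ])`: maximal size of a `θ`-code in the strip `Z(n, [ψ, φ])`. -/
def stripMax (n : ℕ) (θ ψ φ : ℝ) : ℕ :=
  sSup {M | ∃ C : Finset (EuclideanSpace ℝ (Fin n)), IsCode θ C ∧
    (∀ x ∈ C, ψ ≤ aDist x (north n) ∧ aDist x (north n) ≤ φ) ∧ C.card = M}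

/-- `m(n, d)`: maximal number of points in the closed unit ball of `ℝ^n` with pairwise
Euclidean distances at least `d`. -/
def ballMax (n : ℕ) (d : ℝ) : ℕ :=
  sSup {M | ∃ C : Finset (EuclideanSpace ℝ (Fin n)), (∀ x ∈ C, ‖x‖ ≤ 1) ∧
    (∀ x ∈ C, ∀ y ∈ C, x ≠ y → d ≤ dist x y) ∧ C.card = M}

/-- `ω(θ, α, β) = arccos((cos θ - cos α cos β) / (sin α sin β))`. -/
def omega2 (θ α β : ℝ) : ℝ :=
  Real.arccos ((Real.cos θ - Real.cos α * Real.cos β) / (Real.sin α * Real.sin β))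

/-- `ω(θ, α) := ω(θ, α, α)`. -/
def omega1 (θ α : ℝ) : ℝ := omega2 θ α α

end

/-
A unit vector `x` at angle `α` from the pole `e` is `cos α • e + sin α • u` for a unit `u ⟂ e`,
its longitude. By the spherical law of cosines, points at angles `α, β` from `e` and at distance
`d` from each other have longitudes at distance `ω(d, α, β)`. For `0 < α, β ≤ φ ≤ π / 2` and
`φ ≤ θ ≤ d ≤ π` this is at least `ω(θ, φ, φ)`: the worst case is that of two boundary points at
distance exactly `θ`. So sending each point to its longitude turns a `θ`-code in the cap into an
`ω(θ, φ)`-code of the same size in the equator, and putting every longitude back on the boundary of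
the cap is a converse.
-/

open Real InnerProductGeometry
open scoped RealInnerProductSpace

section Omega

variable {θ φ α β : ℝ}

lemma omega2_comm (θ α β : ℝ) : omega2 θ α β = omega2 θ β α := by
  simp only [omega2, mul_comm]

lemma omega2_mono_distance {d : ℝ} (hα : 0 ≤ sin α) (hβ : 0 ≤ sin β) (hθ : 0 ≤ θ)
    (hθd : θ ≤ d) (hd : d ≤ π) : omega2 θ α β ≤ omega2 d α β := by
  have hcos : cos d ≤ cos θ := cos_le_cos_of_nonneg_of_le_pi hθ hd hθd
  unfold omega2
  gcongr

lemma sin_sub_sin_le_sin_sub (hα : 0 ≤ sin α) (hαφ : 0 ≤ sin (φ - α)) :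
    sin φ - sin α ≤ sin (φ - α) := by
  have hsum : sin φ = sin (φ - α) * cos α + cos (φ - α) * sin α := by
    rw [← sin_add, sub_add_cancel]
  have hcos_le : sin (φ - α) * cos α ≤ sin (φ - α) := mul_le_of_le_one_right hαφ (cos_le_one α)
  have hsin_le : cos (φ - α) * sin α ≤ sin α := mul_le_of_le_one_left hα (cos_le_one _)
  linarith

lemma omega2_anti_radius (hα : 0 < α) (hαφ : α ≤ φ) (hφ : φ ≤ π / 2) (hβ : 0 < β)
    (hβ' : β ≤ π / 2) (hβθ : β ≤ θ) (hθ : θ ≤ π) : omega2 θ φ β ≤ omega2 θ α β := by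
  have hsinα : 0 < sin α := sin_pos_of_pos_of_lt_pi hα (by linarith)
  have hsinφ : 0 < sin φ := sin_pos_of_pos_of_lt_pi (by linarith) (by linarith)
  have hsinβ : 0 < sin β := sin_pos_of_pos_of_lt_pi hβ (by linarith)
  have hcosβ : 0 ≤ cos β := cos_nonneg_of_mem_Icc ⟨by linarith, hβ'⟩
  have hcosθ : cos θ ≤ cos β := cos_le_cos_of_nonneg_of_le_pi hβ.le hθ hβθ
  have hsin : sin α ≤ sin φ := sin_le_sin_of_le_of_le_pi_div_two (by linarith) hφ hαφ
  have hsub : sin φ - sin α ≤ sin (φ - α) :=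
    sin_sub_sin_le_sin_sub hsinα.le (sin_nonneg_of_nonneg_of_le_pi (by linarith) (by linarith))
  have key : cos θ * (sin φ - sin α) ≤ cos β * (sin φ * cos α - cos φ * sin α) :=
    calc cos θ * (sin φ - sin α)
        ≤ cos β * (sin φ - sin α) := by gcongr
      _ ≤ cos β * sin (φ - α) := by gcongr
      _ = cos β * (sin φ * cos α - cos φ * sin α) := by rw [sin_sub]
  refine arccos_le_arccos ?_
  rw [← div_div, ← div_div]
  gcongr ?_ / sin β
  rw [div_le_div_iff₀ hsinα hsinφ]
  linarith

lemma omega1_le_omega2 (hα : 0 < α) (hαφ : α ≤ φ) (hβ : 0 < β) (hβφ : β ≤ φ) (hφ : φ ≤ π / 2)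
    (hφθ : φ ≤ θ) (hθ : θ ≤ π) : omega1 θ φ ≤ omega2 θ α β :=
  calc omega2 θ φ φ
      ≤ omega2 θ β φ := omega2_anti_radius hβ hβφ hφ (by linarith) hφ hφθ hθ
    _ = omega2 θ φ β := omega2_comm θ β φ
    _ ≤ omega2 θ α β :=
        omega2_anti_radius hα hαφ hφ hβ (by linarith) (by linarith) hθ

lemma omega1_pos (hφ : sin φ ≠ 0) (hθ : cos θ < 1) : 0 < omega1 θ φ := by
  rw [omega1, omega2, arccos_pos, div_lt_one (mul_self_pos.2 hφ)]
  linarith [sin_sq_add_cos_sq φ]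

lemma cos_omega1 (hφ : sin φ ≠ 0) (hθ : cos (2 * φ) ≤ cos θ) :
    cos (omega1 θ φ) = (cos θ - cos φ * cos φ) / (sin φ * sin φ) := by
  have hsin : 0 < sin φ * sin φ := mul_self_pos.2 hφ
  have hsq : sin φ ^ 2 + cos φ ^ 2 = 1 := sin_sq_add_cos_sq φ
  rw [cos_two_mul] at hθ
  apply cos_arccos
  · rw [le_div_iff₀ hsin]
    linarith
  · rw [div_le_one hsin]
    linarith [cos_le_one θ]

end Omega

section PolarCoordinates

variable {E : Type*} [NormedAddCommGroup E] [InnerProductSpace ℝ E] {e : E} {α β : ℝ}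
  {u v : (ℝ ∙ e)ᗮ}

/-- The point with polar angle `α` and longitude `u` about the pole `e`. It lies on the unit sphere
when `e` and `u` are unit vectors; the latter is left to the hypotheses, so that longitudes form an
inner product space. -/
noncomputable def polarPoint (e : E) (α : ℝ) (u : (ℝ ∙ e)ᗮ) : E := cos α • e + sin α • (u : E)

lemma inner_polarPoint (he : ‖e‖ = 1) (α β : ℝ) (u v : (ℝ ∙ e)ᗮ) :
    ⟪polarPoint e α u, polarPoint e β v⟫ = cos α * cos β + sin α * sin β * ⟪u, v⟫ := by
  have hu : ⟪(u : E), e⟫ = 0 := Submodule.mem_orthogonal_singleton_iff_inner_left.1 u.2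
  have hv : ⟪e, (v : E)⟫ = 0 := Submodule.mem_orthogonal_singleton_iff_inner_right.1 v.2
  simp only [polarPoint, inner_add_left, inner_add_right, real_inner_smul_left,
    real_inner_smul_right, hu, hv, real_inner_self_eq_norm_sq, he, Submodule.coe_inner]
  ring

lemma norm_polarPoint (he : ‖e‖ = 1) (hu : ‖u‖ = 1) (α : ℝ) : ‖polarPoint e α u‖ = 1 := by
  rw [norm_eq_sqrt_real_inner, inner_polarPoint he, real_inner_self_eq_norm_sq, hu, one_pow,
    mul_one, ← sq, ← sq, cos_sq_add_sin_sq, sqrt_one]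

lemma angle_polarPoint_pole (he : ‖e‖ = 1) (hu : ‖u‖ = 1) (hα : 0 ≤ α) (hα' : α ≤ π) :
    angle (polarPoint e α u) e = α := by
  have hperp : ⟪(u : E), e⟫ = 0 := Submodule.mem_orthogonal_singleton_iff_inner_left.1 u.2
  have hinner : ⟪polarPoint e α u, e⟫ = cos α := by
    simp [polarPoint, inner_add_left, real_inner_smul_left, hperp, he]
  rw [angle, hinner, norm_polarPoint he hu, he, mul_one, div_one, arccos_cos hα hα']

lemma exists_norm_eq_one_norm_smul_eq {F : Type*} [NormedAddCommGroup F] [NormedSpace ℝ F]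
    [Nontrivial F] (p : F) : ∃ u : F, ‖u‖ = 1 ∧ ‖p‖ • u = p := by
  rcases eq_or_ne p 0 with rfl | hp
  · obtain ⟨u, hu⟩ := exists_norm_eq F zero_le_one
    exact ⟨u, hu, by simp⟩
  · exact ⟨NormedSpace.normalize p, NormedSpace.norm_normalize_eq_one_iff.2 hp,
      NormedSpace.norm_smul_normalize p⟩

lemma exists_polarPoint_eq [Nontrivial (ℝ ∙ e)ᗮ] (he : ‖e‖ = 1) {x : E} (hx : ‖x‖ = 1) :
    ∃ u : (ℝ ∙ e)ᗮ, ‖u‖ = 1 ∧ polarPoint e (angle x e) u = x := by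
  have hcos : ⟪e, x⟫ = cos (angle x e) := by
    rw [real_inner_comm, inner_eq_cos_angle_of_norm_eq_one hx he]
  have hmem : x - cos (angle x e) • e ∈ (ℝ ∙ e)ᗮ := by
    rw [Submodule.mem_orthogonal_singleton_iff_inner_right, inner_sub_right, real_inner_smul_right,
      real_inner_self_eq_norm_sq, he, hcos]
    ring
  have hnorm : ‖x - cos (angle x e) • e‖ = sin (angle x e) := by
    rw [← sq_eq_sq₀ (norm_nonneg _) (sin_angle_nonneg x e), norm_sub_sq_real,
      real_inner_smul_right, real_inner_comm, hcos, norm_smul, hx, he, mul_one, norm_eq_abs,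
      sq_abs, sin_sq]
    ring
  obtain ⟨u, hu, hsmul⟩ := exists_norm_eq_one_norm_smul_eq (⟨_, hmem⟩ : (ℝ ∙ e)ᗮ)
  refine ⟨u, hu, ?_⟩
  have hsmul' : sin (angle x e) • (u : E) = x - cos (angle x e) • e := by
    rw [← hnorm]
    exact congrArg Subtype.val hsmul
  rw [polarPoint, hsmul', add_sub_cancel]

lemma cos_angle_polarPoint (he : ‖e‖ = 1) (hu : ‖u‖ = 1) (hv : ‖v‖ = 1) (α β : ℝ) :
    cos (angle (polarPoint e α u) (polarPoint e β v)) =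
      cos α * cos β + sin α * sin β * cos (angle u v) := by
  rw [← inner_eq_cos_angle_of_norm_eq_one (norm_polarPoint he hu α) (norm_polarPoint he hv β),
    inner_polarPoint he, inner_eq_cos_angle_of_norm_eq_one hu hv]

lemma omega2_angle_polarPoint (he : ‖e‖ = 1) (hu : ‖u‖ = 1) (hv : ‖v‖ = 1) (hα : sin α ≠ 0)
    (hβ : sin β ≠ 0) :
    omega2 (angle (polarPoint e α u) (polarPoint e β v)) α β = angle u v := by
  rw [omega2, cos_angle_polarPoint he hu hv, add_sub_cancel_left,
    mul_div_cancel_left₀ _ (mul_ne_zero hα hβ), arccos_cos (angle_nonneg u v) (angle_le_pi u v)]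

lemma omega1_le_angle_longitude {θ φ : ℝ} (he : ‖e‖ = 1) (hφ : φ ≤ π / 2) (hφθ : φ < θ)
    (hu : ‖u‖ = 1) (hv : ‖v‖ = 1) (hα : 0 ≤ α) (hαφ : α ≤ φ) (hβ : 0 ≤ β) (hβφ : β ≤ φ)
    (hθ : θ ≤ angle (polarPoint e α u) (polarPoint e β v)) : omega1 θ φ ≤ angle u v := by
  -- The triangle inequality through `e` keeps both points away from the pole.
  have htri : θ ≤ α + β :=
    calc θ ≤ angle (polarPoint e α u) (polarPoint e β v) := hθ
      _ ≤ angle (polarPoint e α u) e + angle e (polarPoint e β v) := angle_le_angle_add_angle _ _ _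
      _ = α + β := by
        rw [angle_comm e, angle_polarPoint_pole he hu hα (by linarith),
          angle_polarPoint_pole he hv hβ (by linarith)]
  have hsinα : 0 < sin α := sin_pos_of_pos_of_lt_pi (by linarith) (by linarith)
  have hsinβ : 0 < sin β := sin_pos_of_pos_of_lt_pi (by linarith) (by linarith)
  calc omega1 θ φ
      ≤ omega2 θ α β :=
        omega1_le_omega2 (by linarith) hαφ (by linarith) hβφ hφ hφθ.le (by linarith)
    _ ≤ omega2 (angle (polarPoint e α u) (polarPoint e β v)) α β :=
        omega2_mono_distance hsinα.le hsinβ.le (by linarith) hθ (angle_le_pi _ _)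
    _ = angle u v := omega2_angle_polarPoint he hu hv hsinα.ne' hsinβ.ne'

lemma le_angle_polarPoint {θ φ : ℝ} (he : ‖e‖ = 1) (hφ : sin φ ≠ 0) (hθ : 0 ≤ θ) (hθφ : θ ≤ 2 * φ)
    (hφπ : 2 * φ ≤ π) (hu : ‖u‖ = 1) (hv : ‖v‖ = 1) (huv : omega1 θ φ ≤ angle u v) :
    θ ≤ angle (polarPoint e φ u) (polarPoint e φ v) := by
  have hcos : cos (angle u v) ≤ cos (omega1 θ φ) :=
    cos_le_cos_of_nonneg_of_le_pi (arccos_nonneg _) (angle_le_pi u v) huv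
  rw [← strictAntiOn_cos.le_iff_ge ⟨angle_nonneg _ _, angle_le_pi _ _⟩ ⟨hθ, hθφ.trans hφπ⟩]
  calc cos (angle (polarPoint e φ u) (polarPoint e φ v))
      = cos φ * cos φ + sin φ * sin φ * cos (angle u v) := cos_angle_polarPoint he hu hv φ φ
    _ ≤ cos φ * cos φ + sin φ * sin φ * cos (omega1 θ φ) := by
        gcongr
        exact mul_self_nonneg _
    _ = cos θ := by
        rw [cos_omega1 hφ (cos_le_cos_of_nonneg_of_le_pi hθ hφπ hθφ)]
        field_simp
        ring

end PolarCoordinates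

section SphericalCode

variable {E F : Type*} [NormedAddCommGroup E] [InnerProductSpace ℝ E] [NormedAddCommGroup F]
  [InnerProductSpace ℝ F] {θ φ : ℝ}

/-- A `θ`-code on the unit sphere of an inner product space: a finite set of unit vectors at
pairwise angles at least `θ`. This is the coordinate-free form of `IsCode`. -/
def IsSphericalCode (θ : ℝ) (C : Finset E) : Prop :=
  (∀ x ∈ C, ‖x‖ = 1) ∧ (C : Set E).Pairwise fun x y ↦ θ ≤ angle x y

/-- The cardinalities of the `θ`-codes on the unit sphere of `E`; the supremum is `A(n, θ)` when
`E` is `ℝ^n`. -/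
def codeSizes (E : Type*) [NormedAddCommGroup E] [InnerProductSpace ℝ E] (θ : ℝ) : Set ℕ :=
  {M | ∃ C : Finset E, IsSphericalCode θ C ∧ C.card = M}

/-- The cardinalities of the `θ`-codes in the cap of angular radius `φ` about the pole `e`; the
supremum is `A(n, θ, φ)` when `e` is the North pole of `ℝ^n`. -/
def capCodeSizes (e : E) (θ φ : ℝ) : Set ℕ :=
  {M | ∃ C : Finset E, IsSphericalCode θ C ∧ (∀ x ∈ C, angle x e ≤ φ) ∧ C.card = M}

lemma exists_isSphericalCode_image {ι : Type*} (hθ : 0 < θ) {s : Finset ι} {f : ι → E}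
    (hnorm : ∀ i ∈ s, ‖f i‖ = 1)
    (hangle : (s : Set ι).Pairwise fun i j ↦ θ ≤ angle (f i) (f j)) :
    ∃ C : Finset E, IsSphericalCode θ C ∧ C.card = s.card ∧ ∀ x ∈ C, ∃ i ∈ s, f i = x := by
  classical
  have hinj : Set.InjOn f s := by
    intro i hi j hj hij
    by_contra hne
    have hzero : angle (f i) (f j) = 0 := by
      rw [hij, angle_self (norm_ne_zero_iff.1 (by simp [hnorm j hj]))]
    linarith [hangle hi hj hne]
  refine ⟨s.image f, ⟨Finset.forall_mem_image.2 hnorm, ?_⟩, Finset.card_image_of_injOn hinj,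
    fun x ↦ Finset.mem_image.1⟩
  rw [Finset.coe_image, hinj.pairwise_image]
  exact hangle

lemma codeSizes_subset_of_linearIsometry (f : E →ₗᵢ[ℝ] F) (θ : ℝ) :
    codeSizes E θ ⊆ codeSizes F θ := by
  rintro _ ⟨C, ⟨hnorm, hangle⟩, rfl⟩
  refine ⟨C.map ⟨f, f.injective⟩, ⟨?_, ?_⟩, C.card_map _⟩
  · simpa only [Finset.forall_mem_map, Function.Embedding.coeFn_mk, f.norm_map] using hnorm
  · rw [Finset.coe_map, Function.Embedding.coeFn_mk, f.injective.injOn.pairwise_image]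
    exact hangle.imp fun x y hxy ↦ hxy.trans_eq (f.angle_map x y).symm

lemma codeSizes_congr (f : E ≃ₗᵢ[ℝ] F) (θ : ℝ) : codeSizes E θ = codeSizes F θ :=
  (codeSizes_subset_of_linearIsometry f.toLinearIsometry θ).antisymm
    (codeSizes_subset_of_linearIsometry f.symm.toLinearIsometry θ)

lemma capCodeSizes_subset {e : E} [Nontrivial (ℝ ∙ e)ᗮ] (he : ‖e‖ = 1) (hφ : φ ≤ π / 2)
    (hφθ : φ < θ) (hω : 0 < omega1 θ φ) :
    capCodeSizes e θ φ ⊆ codeSizes (ℝ ∙ e)ᗮ (omega1 θ φ) := by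
  rintro _ ⟨C, ⟨hnorm, hangle⟩, hcap, rfl⟩
  choose! longitude hlong hpolar using fun x (hx : ‖x‖ = 1) ↦ exists_polarPoint_eq he hx
  obtain ⟨D, hD, hcard, -⟩ := exists_isSphericalCode_image (s := C) (f := longitude) hω
    (fun x hx ↦ hlong x (hnorm x hx)) fun x hx y hy hxy ↦
      omega1_le_angle_longitude he hφ hφθ (hlong x (hnorm x hx)) (hlong y (hnorm y hy))
        (angle_nonneg x e) (hcap x hx) (angle_nonneg y e) (hcap y hy)
        (by simpa only [hpolar x (hnorm x hx), hpolar y (hnorm y hy)] using hangle hx hy hxy)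
  exact ⟨D, hD, hcard⟩

lemma codeSizes_subset_capCodeSizes {e : E} (he : ‖e‖ = 1) (hφ : 0 < φ) (hφ' : φ ≤ π / 2)
    (hθ : 0 < θ) (hθφ : θ ≤ 2 * φ) :
    codeSizes (ℝ ∙ e)ᗮ (omega1 θ φ) ⊆ capCodeSizes e θ φ := by
  have hsin : 0 < sin φ := sin_pos_of_pos_of_lt_pi hφ (by linarith)
  rintro _ ⟨D, ⟨hnorm, hangle⟩, rfl⟩
  obtain ⟨C, hC, hcard, hpre⟩ := exists_isSphericalCode_image (s := D) (f := polarPoint e φ) hθ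
    (fun u hu ↦ norm_polarPoint he (hnorm u hu) φ) fun u hu v hv huv ↦
      le_angle_polarPoint he hsin.ne' hθ.le hθφ (by linarith) (hnorm u hu) (hnorm v hv)
        (hangle hu hv huv)
  refine ⟨C, hC, fun x hx ↦ ?_, hcard⟩
  obtain ⟨u, hu, rfl⟩ := hpre x hx
  exact (angle_polarPoint_pole he (hnorm u hu) hφ.le (by linarith)).le

theorem stmt4_general {e : E} [Nontrivial (ℝ ∙ e)ᗮ] (he : ‖e‖ = 1) (hφ : φ ≤ π / 2) (h1 : φ < θ)
    (h2 : θ ≤ 2 * φ) : capCodeSizes e θ φ = codeSizes (ℝ ∙ e)ᗮ (omega1 θ φ) := by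
  have hφ0 : 0 < φ := by linarith
  have hsin : 0 < sin φ := sin_pos_of_pos_of_lt_pi hφ0 (by linarith)
  have hcos : cos θ < 1 := by
    simpa only [cos_zero] using cos_lt_cos_of_nonneg_of_le_pi le_rfl (by linarith) (hφ0.trans h1)
  exact (capCodeSizes_subset he hφ h1 (omega1_pos hsin.ne' hcos)).antisymm
    (codeSizes_subset_capCodeSizes he hφ0 hφ (hφ0.trans h1) h2)

end SphericalCode

section Coordinates

variable {n : ℕ}

lemma aDist_eq_angle {x y : EuclideanSpace ℝ (Fin n)} (hx : ‖x‖ = 1) (hy : ‖y‖ = 1) :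
    aDist x y = angle x y := by
  rw [aDist, angle, hx, hy, mul_one, div_one]

lemma isCode_iff_isSphericalCode {θ : ℝ} {C : Finset (EuclideanSpace ℝ (Fin n))} :
    IsCode θ C ↔ IsSphericalCode θ C :=
  and_congr_right fun hnorm ↦ forall₂_congr fun x hx ↦ forall₂_congr fun y hy ↦ by
    rw [aDist_eq_angle (hnorm x hx) (hnorm y hy)]

lemma norm_north (hn : 0 < n) : ‖north n‖ = 1 := by
  simp [north, hn]

lemma sphereMax_eq_sSup_codeSizes (n : ℕ) (θ : ℝ) :
    sphereMax n θ = sSup (codeSizes (EuclideanSpace ℝ (Fin n)) θ) := by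
  simp only [sphereMax, codeSizes, isCode_iff_isSphericalCode]

lemma capMax_eq_sSup_capCodeSizes (hn : 0 < n) (θ φ : ℝ) :
    capMax n θ φ = sSup (capCodeSizes (north n) θ φ) := by
  refine congrArg sSup (Set.ext fun M ↦ exists_congr fun C ↦ ?_)
  rw [isCode_iff_isSphericalCode]
  refine and_congr_right fun hC ↦ and_congr_left' (forall₂_congr fun x hx ↦ ?_)
  rw [aDist_eq_angle (hC.1 x hx) (norm_north hn)]

/-- An identification of the equatorial hyperplane of `ℝ^(n+1)` with `ℝ^n`, carrying codes on the
equator to codes on the sphere of `ℝ^n`; it depends on a choice of orthonormal basis. -/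
noncomputable def northPerpEquiv (n : ℕ) :
    (ℝ ∙ north (n + 1))ᗮ ≃ₗᵢ[ℝ] EuclideanSpace ℝ (Fin n) :=
  haveI : Fact (Module.finrank ℝ (EuclideanSpace ℝ (Fin (n + 1))) = n + 1) := ⟨by simp⟩
  (OrthonormalBasis.fromOrthogonalSpanSingleton n
    (norm_ne_zero_iff.1 (by simp [norm_north n.succ_pos]))).repr

end Coordinates

theorem stmt4 (n : ℕ) (hn : 3 ≤ n) (θ φ : ℝ) (hφ : 0 < φ) (hφ2 : φ ≤ Real.pi / 2)
    (h1 : φ < θ) (h2 : θ ≤ 2 * φ) :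
    capMax n θ φ = sphereMax (n - 1) (omega1 θ φ) := by
  obtain ⟨m, rfl⟩ : ∃ m, n = m + 1 := ⟨n - 1, by lia⟩
  have : NeZero m := ⟨by lia⟩
  have : Nontrivial (ℝ ∙ north (m + 1))ᗮ := (northPerpEquiv m).toEquiv.nontrivial
  rw [capMax_eq_sSup_capCodeSizes m.succ_pos, stmt4_general (norm_north m.succ_pos) hφ2 h1 h2,
    codeSizes_congr (northPerpEquiv m), add_tsub_cancel_right, sphereMax_eq_sSup_codeSizes]
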